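/- Let μ be a probability measure on {0,1}^{ℤ²} which is positively associated, satisfies the bounded energy condition, is such that μ-almost surely there exists exactly one infinite 0cluster and at most one infinite 1*cluster, and for which there is a constant c > 0 with μ(x belongs to an infinite 1*cluster) ≥ c for every x ∈ ℤ². Then for every finite set Γ ⊂ ℤ² containing the origin there exist a site x on the left side of Γ and a site y on the right side of Γ such that: there exists h > 0 with μ(there is a 1*path from x+(0,h) to y+(0,h) avoiding Γ with negative winding number) ≥ c²/4, and there exists h < 0 with μ(there is a 1*path from x+(0,h) to y+(0,h) avoiding Γ with positive winding number) ≥ c²/4. -/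

import Mathlib

/-!
Take `x = (-d, 0)` and `y = (d, 0)` with `d` large, and let `B` be a large square containing `Γ`;
paths are asked to avoid `B` instead of `Γ`. Write `x_h`, `y_h` for the sites at height `h`.

*Connection off `B`.* By positive association both `x_h` and `y_h` lie in infinite `1*`clusters
with probability at least `c²`. Turning `B` to `0` still leaves at most one infinite `1*`cluster,
by bounded energy, and it disconnects from infinity only sites within a bounded (random) distance
(`exists_bound_far`). Hence, for `d` large and all `h` simultaneously, `x_h` and `y_h` are joined
by a `1*`path off `B` with probability at least `c² - c²/8`. The winding number of such a path is
nonzero (`winding_ne_zero`), so the path passes `B` on one side or on the other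
(`sq_le_goodPath`).

*The far side is not always likely.* Suppose that for all heights `h` of a given sign the path
passes `B` on the side away from height `h` with probability bounded below. Turning the `2d + 1`
spins of the segment between `x_h` and `y_h` to `1` has a cost independent of `h`, and closes the
path to a `1*`circuit around `B`. The square `B` is chosen so large that it meets an infinite
`0`cluster with probability at least `1 - c²/8`; this event is the decreasing limit of local events
`escapesUpTo`, so for `|h|` large it is decided up to an arbitrarily small error by spins which
the modification does not touch. As the circuit destroys it (`no_escape`), this is a contradiction
(`exists_goodPath_lt`). So for some height of each sign the near side has probability at least
`c²/4`.

*Circuits separate.* `no_escape` needs that a closed `*`path winds equally often around two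
neighbouring sites off the path. By the quadrilateral relation `ang_sub_ang` the angles of a step
seen from the two sites differ by a coboundary, which telescopes to zero along a closed path.
Seen from far away, the total angle vanishes.
-/

open MeasureTheory ProbabilityTheory
open scoped ENNReal

namespace Percolation

/-- Sites of the square lattice. -/
abbrev Site : Type := ℤ × ℤ

/-- Configurations: spins `0`/`1` encoded as `false`/`true`. -/
abbrev Config : Type := Site → Bool

/-- Nearest-neighbour adjacency: Euclidean distance `1`. -/
def adj (x y : Site) : Prop :=
  (x.1 - y.1) ^ 2 + (x.2 - y.2) ^ 2 = 1

/-- `*`adjacency: Euclidean distance `1` or `√2`. -/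
def adjStar (x y : Site) : Prop :=
  x ≠ y ∧ |x.1 - y.1| ≤ 1 ∧ |x.2 - y.2| ≤ 1

/-- `x` and `y` are joined inside `G` by a path whose consecutive sites satisfy `R`. -/
def JoinedIn (R : Site → Site → Prop) (G : Set Site) (x y : Site) : Prop :=
  ∃ P : List Site, P.Chain' R ∧ (∀ z ∈ P, z ∈ G) ∧ P.head? = some x ∧ P.getLast? = some y

/-- `S` is a `0`cluster of `σ`: a maximal `adj`-connected subset of `σ⁻¹(0)`. -/
def IsCluster0 (σ : Config) (S : Set Site) : Prop :=
  S.Nonempty ∧ (∀ z ∈ S, σ z = false) ∧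
    (∀ x ∈ S, ∀ y ∈ S, JoinedIn adj S x y) ∧
    (∀ x ∈ S, ∀ y : Site, adj x y → σ y = false → y ∈ S)

/-- `S` is a `1*`cluster of `σ`: a maximal `adjStar`-connected subset of `σ⁻¹(1)`. -/
def IsCluster1 (σ : Config) (S : Set Site) : Prop :=
  S.Nonempty ∧ (∀ z ∈ S, σ z = true) ∧
    (∀ x ∈ S, ∀ y ∈ S, JoinedIn adjStar S x y) ∧
    (∀ x ∈ S, ∀ y : Site, adjStar x y → σ y = true → y ∈ S)

/-- `x` belongs to an infinite `1*`cluster of `σ`. -/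
def InInfinite1 (σ : Config) (x : Site) : Prop :=
  ∃ S : Set Site, IsCluster1 σ S ∧ S.Infinite ∧ x ∈ S

/-- There is exactly one infinite `0`cluster. -/
def UniqueInfinite0 (σ : Config) : Prop :=
  ∃! S : Set Site, IsCluster0 σ S ∧ S.Infinite

/-- There is exactly one infinite `1*`cluster. -/
def UniqueInfinite1 (σ : Config) : Prop :=
  ∃! S : Set Site, IsCluster1 σ S ∧ S.Infinite

/-- There is at most one infinite `1*`cluster. -/
def AtMostOneInfinite1 (σ : Config) : Prop :=
  ∀ S T : Set Site, IsCluster1 σ S → S.Infinite → IsCluster1 σ T → T.Infinite → S = T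

/-- An infinite `1*`cluster exists. -/
def ExistsInfinite1 (σ : Config) : Prop := ∃ S : Set Site, IsCluster1 σ S ∧ S.Infinite

/-- An infinite `0`cluster exists. -/
def ExistsInfinite0 (σ : Config) : Prop := ∃ S : Set Site, IsCluster0 σ S ∧ S.Infinite

/-- An increasing event. -/
def IncreasingEvent (A : Set Config) : Prop :=
  ∀ ⦃ξ η : Config⦄, ξ ∈ A → ξ ≤ η → η ∈ A

/-- Positive association: increasing events are positively correlated. -/
def PositivelyAssociated (μ : Measure Config) : Prop :=
  ∀ A B : Set Config, MeasurableSet A → MeasurableSet B →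
    IncreasingEvent A → IncreasingEvent B → μ A * μ B ≤ μ (A ∩ B)

/-- The cylinder event "`η` on `Δ`". -/
def cylEvent (Δ : Finset Site) (η : Site → Bool) : Set Config :=
  {σ | ∀ z ∈ Δ, σ z = η z}

/-- The σ-algebra generated by the spins outside `Δ`. -/
def outsideAlgebra (Δ : Finset Site) : MeasurableSpace Config :=
  MeasurableSpace.comap (fun σ (z : {z : Site // z ∉ Δ}) => σ z.1) inferInstance

/-- The bounded energy condition: `μ(η on Δ | ξ off Δ) ≥ c_{|Δ|}` for a.e. `ξ`, expressed
via integrated conditional probabilities against events of the outside σ-algebra. -/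
def BoundedEnergy (μ : Measure Config) : Prop :=
  ∀ n : ℕ, ∃ c : ℝ≥0∞, 0 < c ∧
    ∀ Δ : Finset Site, Δ.card = n → ∀ η : Site → Bool,
      ∀ B : Set Config, MeasurableSet[outsideAlgebra Δ] B →
        c * μ B ≤ μ (cylEvent Δ η ∩ B)

/-- The finite energy condition: `μ(η on Δ | ξ off Δ) > 0` for a.e. `ξ`, expressed
via integrated conditional probabilities against events of the outside σ-algebra. -/
def FiniteEnergy (μ : Measure Config) : Prop :=
  ∀ (Δ : Finset Site) (η : Site → Bool) (B : Set Config),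
    MeasurableSet[outsideAlgebra Δ] B → 0 < μ B → 0 < μ (cylEvent Δ η ∩ B)

/-- The tail σ-algebra. -/
def tailAlgebra : MeasurableSpace Config :=
  ⨅ Δ : Finset Site, outsideAlgebra Δ

/-- Translation of configurations by `v`. -/
def shift (v : Site) (σ : Config) : Config := fun z => σ (z + v)

/-- A site viewed as a complex number. -/
noncomputable def toC (z : Site) : ℂ := (z.1 : ℂ) + (z.2 : ℂ) * Complex.I

/-- Winding number around the origin of the polygonal curve through the sites of `P`. -/
noncomputable def winding (P : List Site) : ℝ :=
  (1 / (2 * Real.pi)) *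
    ((P.zip P.tail).map fun p => Complex.arg (toC p.2 / toC p.1)).sum

/-- Winding number of `P` around the site `w`. -/
noncomputable def windingAround (P : List Site) (w : Site) : ℝ :=
  winding (P.map fun z => z - w)

/-- The site `w` lies in the interior of the circuit `C`, i.e. is enclosed by `C`. -/
def circuitEncloses (C : List Site) (w : Site) : Prop :=
  w ∉ C ∧ windingAround (C ++ C.take 1) w ≠ 0

/-- A circuit: a path whose starting site is adjacent to its ending site. -/
def IsCircuit (C : List Site) : Prop :=
  C.Chain' adj ∧ ∃ h : C ≠ [], adj (C.getLast h) (C.head h)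

/-- A `*`circuit: a `*`path whose starting site is `*`adjacent to its ending site. -/
def IsStarCircuit (C : List Site) : Prop :=
  C.Chain' adjStar ∧ ∃ h : C ≠ [], adjStar (C.getLast h) (C.head h)

/-- A (finite) `1*`path with respect to `σ`. -/
def Is1StarPath (σ : Config) (P : List Site) : Prop :=
  P ≠ [] ∧ P.Chain' adjStar ∧ ∀ z ∈ P, σ z = true

/-- A (finite) `0`path with respect to `σ`. -/
def Is0Path (σ : Config) (P : List Site) : Prop :=
  P ≠ [] ∧ P.Chain' adj ∧ ∀ z ∈ P, σ z = false

/-- A `1*`circuit with respect to `σ`. -/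
def Is1StarCircuit (σ : Config) (C : List Site) : Prop :=
  IsStarCircuit C ∧ ∀ z ∈ C, σ z = true

/-- A `0`circuit with respect to `σ`. -/
def Is0Circuit (σ : Config) (C : List Site) : Prop :=
  IsCircuit C ∧ ∀ z ∈ C, σ z = false

/-- `C` is a circuit around `Δ`: every site of `Δ` is enclosed by `C`. -/
def CircuitAround (C : List Site) (Δ : Set Site) : Prop :=
  ∀ z ∈ Δ, circuitEncloses C z

/-- A mixed circuit with respect to `σ`: a self-avoiding `*`circuit consisting of a
self-avoiding `1*`path followed by a self-avoiding `0`path (either part may be empty). -/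
def IsMixedCircuit (σ : Config) (C : List Site) : Prop :=
  ∃ P Q : List Site, C = P ++ Q ∧ C.Nodup ∧
    P.Chain' adjStar ∧ Q.Chain' adj ∧
    (∀ z ∈ P, σ z = true) ∧ (∀ z ∈ Q, σ z = false) ∧ IsStarCircuit C

/-- `z` lies in the exterior of the circuit `C`. -/
def InExterior (C : List Site) (z : Site) : Prop :=
  z ∉ C ∧ ¬ circuitEncloses C z

/-- An infinite self-avoiding `1*`path with respect to `σ`. -/
def IsInfSA1StarPath (σ : Config) (f : ℕ → Site) : Prop :=
  Function.Injective f ∧ (∀ i, adjStar (f i) (f (i + 1))) ∧ ∀ i, σ (f i) = true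

/-- An infinite self-avoiding `0`path with respect to `σ`. -/
def IsInfSA0Path (σ : Config) (f : ℕ → Site) : Prop :=
  Function.Injective f ∧ (∀ i, adj (f i) (f (i + 1))) ∧ ∀ i, σ (f i) = false

/-- There exist `n` pairwise disjoint infinite self-avoiding `1*`paths. -/
def HasNDisjoint1 (σ : Config) (n : ℕ) : Prop :=
  ∃ f : Fin n → ℕ → Site, (∀ i, IsInfSA1StarPath σ (f i)) ∧
    ∀ i j, i ≠ j → Disjoint (Set.range (f i)) (Set.range (f j))

/-- A two-sided infinite self-avoiding `1*`path with respect to `σ`. -/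
def IsTwoSidedInf1 (σ : Config) (f : ℤ → Site) : Prop :=
  Function.Injective f ∧ (∀ i : ℤ, adjStar (f i) (f (i + 1))) ∧ ∀ i : ℤ, σ (f i) = true

/-- A `1*`path of `σ` from `x` to `y` avoiding `Δ`. -/
def starPathBetweenAvoiding (σ : Config) (Δ : Set Site) (x y : Site) (P : List Site) : Prop :=
  Is1StarPath σ P ∧ P.head? = some x ∧ P.getLast? = some y ∧ ∀ z ∈ P, z ∉ Δ

/-- `x` is on the left side of `Γ`. -/
def OnLeftSide (x : Site) (Γ : Set Site) : Prop :=
  ∃ d : ℕ, 0 < d ∧ (∀ z ∈ Γ, |z.1| ≤ (d : ℤ) ∧ |z.2| ≤ (d : ℤ)) ∧ x.1 ≤ -(d : ℤ)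

/-- `x` is on the right side of `Γ`. -/
def OnRightSide (x : Site) (Γ : Set Site) : Prop :=
  ∃ d : ℕ, 0 < d ∧ (∀ z ∈ Γ, |z.1| ≤ (d : ℤ) ∧ |z.2| ≤ (d : ℤ)) ∧ (d : ℤ) ≤ x.1

/-- The square `{-n, …, n}²`. -/
def square (n : ℕ) : Set Site := {z : Site | |z.1| ≤ (n : ℤ) ∧ |z.2| ≤ (n : ℤ)}

/-- The `*`boundary `∂*B` of a set of sites. -/
def starBoundary (B : Set Site) : Set Site :=
  {x | x ∉ B ∧ ∃ y ∈ B, adjStar x y}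

/-- The union of all infinite `1*`clusters of `σ`. -/
def InfinitePart1 (σ : Config) : Set Site := {z | InInfinite1 σ z}

/-- The filled infinite `1*`cluster `S₁*`: the infinite `1*`cluster together with all
finite `0`clusters `*`encircled by it. -/
def Fill (σ : Config) : Set Site :=
  InfinitePart1 σ ∪
    {z | ∃ F : Set Site, IsCluster0 σ F ∧ F.Finite ∧ z ∈ F ∧
      ∃ C : List Site, IsStarCircuit C ∧ (∀ w ∈ C, w ∈ InfinitePart1 σ) ∧
        ∀ w ∈ F, circuitEncloses C w}

/-- The indicator of the filled infinite `1*`cluster, as a point of `{0,1}^{ℤ²}`. -/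
noncomputable def fillInd (σ : Config) : Site → Bool :=
  fun z => @decide (z ∈ Fill σ) (Classical.propDecidable _)

/-- Exactly one infinite `0`cluster and exactly one infinite `1*`cluster coexist. -/
def CoexistUnique (σ : Config) : Prop := UniqueInfinite0 σ ∧ UniqueInfinite1 σ


/-! ### Joining and reachability of infinity -/

lemma joinedIn_iff {R : Site → Site → Prop} {G : Set Site} {x y : Site} :
    JoinedIn R G x y ↔ x ∈ G ∧ Relation.ReflTransGen (fun a b => R a b ∧ b ∈ G) x y := by
  constructor
  · rintro ⟨P, hP, hG, hx, hy⟩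
    induction P generalizing x with
    | nil => simp at hx
    | cons a l ih =>
      obtain rfl : a = x := by simpa using hx
      refine ⟨hG _ (by simp), ?_⟩
      cases l with
      | nil =>
        obtain rfl : a = y := by simpa using hy
        exact .refl
      | cons b l =>
        have hc := List.isChain_cons_cons.1 hP
        have := ih (x := b) hc.2 (fun z hz => hG z (by simp [hz])) (by simp) (by simpa using hy)
        exact .head ⟨hc.1, this.1⟩ this.2
  · rintro ⟨hx, h⟩
    induction h using Relation.ReflTransGen.head_induction_on with
    | refl => exact ⟨[y], List.isChain_singleton _, by simpa using hx, by simp, by simp⟩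
    | @head a b hab _ ih =>
      obtain ⟨P, hP, hG, hb, hy⟩ := ih hab.2
      cases P with
      | nil => simp at hb
      | cons b' l =>
        obtain rfl : b' = b := by simpa using hb
        refine ⟨a :: b' :: l, List.isChain_cons_cons.2 ⟨hab.1, hP⟩, ?_, by simp, by simpa using hy⟩
        intro z hz
        rcases List.mem_cons.1 hz with rfl | hz
        · exact hx
        · exact hG z hz

lemma JoinedIn.mem_right {R : Site → Site → Prop} {G : Set Site} {x y : Site}
    (h : JoinedIn R G x y) : y ∈ G := by
  obtain ⟨hx, h'⟩ := joinedIn_iff.1 h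
  clear h
  induction h' with
  | refl => exact hx
  | tail _ h _ => exact h.2

lemma JoinedIn.trans {R : Site → Site → Prop} {G : Set Site} {x y z : Site}
    (h : JoinedIn R G x y) (h' : JoinedIn R G y z) : JoinedIn R G x z := by
  rw [joinedIn_iff] at *
  exact ⟨h.1, h.2.trans h'.2⟩

lemma joinedIn_refl {R : Site → Site → Prop} {G : Set Site} {x : Site} (h : x ∈ G) :
    JoinedIn R G x x := joinedIn_iff.2 ⟨h, .refl⟩

lemma JoinedIn.step {R : Site → Site → Prop} {G : Set Site} {x y z : Site}
    (h : JoinedIn R G x y) (h' : R y z) (hz : z ∈ G) : JoinedIn R G x z := by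
  rw [joinedIn_iff] at *
  exact ⟨h.1, h.2.tail ⟨h', hz⟩⟩

lemma JoinedIn.mono {R : Site → Site → Prop} {G H : Set Site} {x y : Site}
    (h : JoinedIn R G x y) (hGH : G ⊆ H) : JoinedIn R H x y := by
  obtain ⟨P, h1, h2, h3⟩ := h
  exact ⟨P, h1, fun z hz => hGH (h2 z hz), h3⟩

lemma JoinedIn.symm {R : Site → Site → Prop} (hR : ∀ a b, R a b → R b a)
    {G : Set Site} {x y : Site} (h : JoinedIn R G x y) : JoinedIn R G y x := by
  obtain ⟨hx, h'⟩ := joinedIn_iff.1 h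
  clear h
  induction h' with
  | refl => exact joinedIn_refl hx
  | tail hb h ih =>
    exact (joinedIn_refl h.2).step (hR _ _ h.1) (joinedIn_iff.2 ⟨hx, hb⟩).mem_right |>.trans ih

lemma adjStar_symm (a b : Site) (h : adjStar a b) : adjStar b a :=
  ⟨h.1.symm, by rw [abs_sub_comm]; exact h.2.1, by rw [abs_sub_comm]; exact h.2.2⟩

lemma adj.star {a b : Site} (h : adj a b) : adjStar a b := by
  obtain ⟨a1, a2⟩ := a
  obtain ⟨b1, b2⟩ := b
  simp only [adj, adjStar] at *
  refine ⟨?_, ?_, ?_⟩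
  · rintro h'
    simp only [Prod.mk.injEq] at h'
    simp [h'.1, h'.2] at h
  · rw [abs_le]; constructor <;> nlinarith [sq_nonneg (a2 - b2)]
  · rw [abs_le]; constructor <;> nlinarith [sq_nonneg (a1 - b1)]

lemma square_mono {m n : ℕ} (h : m ≤ n) : square m ⊆ square n := by
  rintro z ⟨h1, h2⟩
  have : (m : ℤ) ≤ n := by exact_mod_cast h
  exact ⟨h1.trans this, h2.trans this⟩

lemma square_finite (n : ℕ) : (square n).Finite := by
  refine (Set.toFinite ((Finset.Icc (-(n : ℤ)) n ×ˢ Finset.Icc (-(n : ℤ)) n : Finset Site) :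
    Set Site)).subset ?_
  rintro ⟨a, b⟩ ⟨h1, h2⟩
  have h1' := abs_le.1 h1
  have h2' := abs_le.1 h2
  simp only [Finset.coe_product, Set.mem_prod, Finset.mem_coe, Finset.mem_Icc]
  exact ⟨h1', h2'⟩

lemma exists_square_superset (F : Set Site) (hF : F.Finite) : ∃ n : ℕ, F ⊆ square n := by
  induction F, hF using Set.Finite.induction_on with
  | empty => exact ⟨0, by simp⟩
  | @insert a s _ _ ih =>
    obtain ⟨n, hn⟩ := ih
    refine ⟨max n (max a.1.natAbs a.2.natAbs), Set.insert_subset ?_ (hn.trans (square_mono ?_))⟩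
    · constructor <;> rw [abs_le] <;> omega
    · omega

lemma mem_square_succ {n : ℕ} {a b : Site} (ha : a ∈ square n) (h : adjStar a b) :
    b ∈ square (n + 1) := by
  obtain ⟨h1, h2⟩ := ha
  obtain ⟨-, h3, h4⟩ := h
  rw [abs_le] at *
  constructor <;> rw [abs_le] <;> push_cast <;> constructor <;> linarith

/-- `x` is joined inside `G` to sites outside every square, that is, its `R`-component in `G`
is infinite. -/
def Far (R : Site → Site → Prop) (G : Set Site) (x : Site) : Prop :=
  ∀ m : ℕ, ∃ y, y ∉ square m ∧ JoinedIn R G x y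

/-- The `1`-sites of `σ`. -/
def ones (σ : Config) : Set Site := {z | σ z = true}

/-- The `0`-sites of `σ`. -/
def zeros (σ : Config) : Set Site := {z | σ z = false}

lemma Far.of_joined {R : Site → Site → Prop} {G : Set Site} {x y : Site}
    (h : JoinedIn R G x y) (hy : Far R G y) : Far R G x := fun m =>
  let ⟨z, hz, hj⟩ := hy m
  ⟨z, hz, h.trans hj⟩

lemma Set.Infinite.exists_notMem_square {S : Set Site} (hS : S.Infinite) (m : ℕ) :
    ∃ y ∈ S, y ∉ square m := by
  by_contra! h
  exact hS ((square_finite m).subset h)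

lemma InInfinite1.far {σ : Config} {x : Site} (h : InInfinite1 σ x) :
    Far adjStar (ones σ) x := by
  obtain ⟨S, ⟨-, h1, h2, -⟩, hS, hx⟩ := h
  intro m
  obtain ⟨y, hy, hm⟩ := Set.Infinite.exists_notMem_square hS m
  exact ⟨y, hm, (h2 x hx y hy).mono h1⟩

/-- The set of sites joined to a `1`-site is its `1*`cluster. -/
lemma isCluster1_joined {σ : Config} {x : Site} (hx : x ∈ ones σ) :
    IsCluster1 σ {y | JoinedIn adjStar (ones σ) x y} := by
  have key : ∀ y, JoinedIn adjStar (ones σ) x y →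
      JoinedIn adjStar {y | JoinedIn adjStar (ones σ) x y} x y := by
    intro y h
    obtain ⟨-, h'⟩ := joinedIn_iff.1 h
    clear h
    induction h' with
    | refl => exact joinedIn_refl (joinedIn_refl hx)
    | tail hb hab ih =>
      have hb : JoinedIn adjStar (ones σ) x _ := ih.mem_right
      exact ih.step hab.1 (hb.step hab.1 hab.2)
  refine ⟨⟨x, joinedIn_refl hx⟩, fun z hz => hz.mem_right, fun a ha b hb => ?_, ?_⟩
  · exact ((key a ha).symm adjStar_symm).trans (key b hb)
  · exact fun a ha b hab hb => JoinedIn.step ha hab hb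

lemma joined_of_atMostOne {σ : Config} (h : AtMostOneInfinite1 σ) {x y : Site}
    (hx : Far adjStar (ones σ) x) (hy : Far adjStar (ones σ) y) :
    JoinedIn adjStar (ones σ) x y := by
  have mem : ∀ {x}, Far adjStar (ones σ) x → x ∈ ones σ := fun hx => by
    obtain ⟨y, -, hj⟩ := hx 0
    exact (joinedIn_iff.1 hj).1
  have inf : ∀ {x}, Far adjStar (ones σ) x →
      {y | JoinedIn adjStar (ones σ) x y}.Infinite := fun hx hfin => by
    obtain ⟨m, hm⟩ := exists_square_superset _ hfin
    obtain ⟨y, hy, hj⟩ := hx m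
    exact hy (hm hj)
  have := h _ _ (isCluster1_joined (mem hx)) (inf hx) (isCluster1_joined (mem hy)) (inf hy)
  have hyy : y ∈ {z | JoinedIn adjStar (ones σ) y z} := joinedIn_refl (mem hy)
  rw [← this] at hyy
  exact hyy

/-- A path leaving `B` behind either never meets `B`, or reaches the `*`boundary of `B` before
meeting `B`. -/
lemma joined_avoid_or {G B : Set Site} {x y : Site} (hx : x ∉ B)
    (h : JoinedIn adjStar G x y) :
    JoinedIn adjStar (G \ B) x y ∨
      ∃ w ∈ starBoundary B, JoinedIn adjStar (G \ B) x w := by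
  obtain ⟨hxG, h'⟩ := joinedIn_iff.1 h
  clear h
  induction h' with
  | refl => exact .inl (joinedIn_refl ⟨hxG, hx⟩)
  | @tail b c hb hbc ih =>
    rcases ih with ih | ih
    · by_cases hc : c ∈ B
      · exact .inr ⟨b, ⟨ih.mem_right.2, c, hc, hbc.1⟩, ih⟩
      · exact .inl (ih.step hbc.1 ⟨hbc.2, hc⟩)
    · exact .inr ih

lemma starBoundary_square_finite (n : ℕ) : (starBoundary (square n)).Finite := by
  refine (square_finite (n + 1)).subset ?_
  rintro x ⟨-, y, hy, hxy⟩
  exact mem_square_succ hy (adjStar_symm _ _ hxy)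

/-- Far from a square, removing this square does not turn sites of infinite `*`components into
sites of finite ones: every site for which this happens is joined to one of the finitely many
boundary sites of the square, inside a finite component. -/
lemma exists_bound_far (G : Set Site) (n : ℕ) :
    ∃ M : ℕ, ∀ x, x ∉ square M → Far adjStar G x → Far adjStar (G \ square n) x := by
  classical
  have h1 : ∀ w, ∃ m : ℕ, (∃ y, y ∉ square m ∧ JoinedIn adjStar (G \ square n) w y) →
      Far adjStar (G \ square n) w := by
    intro w
    by_cases hw : Far adjStar (G \ square n) w
    · exact ⟨0, fun _ => hw⟩
    · obtain ⟨m, hm⟩ := not_forall.1 hw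
      exact ⟨m, fun h => absurd h hm⟩
  choose m hm using h1
  set F := (starBoundary_square_finite n).toFinset with hF
  refine ⟨max n (F.sup m), fun x hx hfar => ?_⟩
  have hxn : x ∉ square n := fun h => hx (square_mono (le_max_left _ _) h)
  by_contra hnot
  obtain ⟨k, hk⟩ := not_forall.1 hnot
  obtain ⟨y, hy, hj⟩ := hfar k
  rcases joined_avoid_or hxn hj with h | ⟨w, hw, h⟩
  · exact hk ⟨y, hy, h⟩
  · have hwF : m w ≤ F.sup m := Finset.le_sup (f := m) (by simpa [hF] using hw)
    exact hnot (Far.of_joined h (hm w ⟨x, fun hxm =>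
      hx (square_mono (hwF.trans (le_max_right _ _)) hxm), h.symm adjStar_symm⟩))

/-- A path leaving `square j` can be stopped at its exit, so that it stays in
`square (j + 1)`. -/
lemma joined_trim {G : Set Site} {j : ℕ} {z w : Site} (hz : z ∈ square j) (hw : w ∉ square j)
    (h : JoinedIn adj G z w) :
    ∃ w', w' ∉ square j ∧ JoinedIn adj (G ∩ square (j + 1)) z w' := by
  obtain ⟨hzG, h'⟩ := joinedIn_iff.1 h
  have : (w ∈ square j ∧ JoinedIn adj (G ∩ square (j + 1)) z w) ∨
      ∃ w', w' ∉ square j ∧ JoinedIn adj (G ∩ square (j + 1)) z w' := by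
    clear hw h
    induction h' with
    | refl => exact .inl ⟨hz, joinedIn_refl ⟨hzG, square_mono (Nat.le_succ j) hz⟩⟩
    | @tail b c hb hbc ih =>
      rcases ih with ⟨hbj, ih⟩ | ih
      · have hj := ih.step hbc.1 ⟨hbc.2, mem_square_succ hbj hbc.1.star⟩
        by_cases hc : c ∈ square j
        · exact .inl ⟨hc, hj⟩
        · exact .inr ⟨c, hc, hj⟩
      · exact .inr ih
  rcases this with h | h
  · exact absurd h.1 hw
  · exact h

/-! ### Angle sums along lattice paths -/

/-- The sum of `F` over consecutive pairs of `P`. -/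
def pathSum {A : Type*} [AddCommGroup A] (F : Site → Site → A) (P : List Site) : A :=
  ((P.zip P.tail).map fun p => F p.1 p.2).sum

lemma pathSum_cons_cons {A : Type*} [AddCommGroup A] (F : Site → Site → A) (a b : Site)
    (l : List Site) : pathSum F (a :: b :: l) = F a b + pathSum F (b :: l) := by
  simp [pathSum]

lemma pathSum_singleton {A : Type*} [AddCommGroup A] (F : Site → Site → A) (a : Site) :
    pathSum F [a] = 0 := by
  simp [pathSum]

lemma pathSum_sub {A : Type*} [AddCommGroup A] (F F' : Site → Site → A) (P : List Site) :
    pathSum (fun a b => F a b - F' a b) P = pathSum F P - pathSum F' P := by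
  simp only [pathSum]
  induction (P.zip P.tail) with
  | nil => simp
  | cons a l ih => simp only [List.map_cons, List.sum_cons, ih]; abel

lemma pathSum_telescope {A : Type*} [AddCommGroup A] {F : Site → Site → A} {g : Site → A}
    {r : Site → Site → Prop} {P : List Site} (hP : P.IsChain r) {x y : Site}
    (hF : ∀ a ∈ P, ∀ b ∈ P, r a b → F a b = g b - g a)
    (hx : P.head? = some x) (hy : P.getLast? = some y) : pathSum F P = g y - g x := by
  induction P generalizing x with
  | nil => simp at hx
  | cons a l ih =>
    obtain rfl : a = x := by simpa using hx
    cases l with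
    | nil =>
      obtain rfl : a = y := by simpa using hy
      simp [pathSum_singleton]
    | cons b l =>
      have hc := List.isChain_cons_cons.1 hP
      rw [pathSum_cons_cons, hF a (by simp) b (by simp) hc.1,
        ih (x := b) hc.2 (fun u hu v hv => hF u (List.mem_cons_of_mem _ hu) v
          (List.mem_cons_of_mem _ hv)) (by simp) (by simpa using hy)]
      abel

/-- The angle under which the step from `a` to `b` is seen from `w`. -/
noncomputable def ang (w a b : Site) : ℝ := Complex.arg (toC (b - w) / toC (a - w))

lemma winding_eq (P : List Site) : winding P = (1 / (2 * Real.pi)) * pathSum (ang 0) P := by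
  simp [winding, pathSum, ang]

lemma toC_re (z : Site) : (toC z).re = z.1 := by simp [toC]

lemma toC_im (z : Site) : (toC z).im = z.2 := by simp [toC]

lemma toC_ne_zero {z : Site} (h : z ≠ 0) : toC z ≠ 0 := by
  intro h'
  apply h
  have h1 := congrArg Complex.re h'
  have h2 := congrArg Complex.im h'
  rw [toC_re] at h1
  rw [toC_im] at h2
  ext
  · exact_mod_cast h1
  · exact_mod_cast h2

lemma div_re_eq (a b : ℂ) : (b / a).re = (b.re * a.re + b.im * a.im) / Complex.normSq a := by
  rw [Complex.div_re]; ring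

lemma div_im_eq (a b : ℂ) : (b / a).im = (b.im * a.re - b.re * a.im) / Complex.normSq a := by
  rw [Complex.div_im]; ring

/-- `*`adjacent lattice points are seen from the origin under an angle at most `π/2`. -/
lemma abs_arg_le_of_adjStar {a b : Site} (h : adjStar a b) :
    |Complex.arg (toC b / toC a)| ≤ Real.pi / 2 := by
  rw [Complex.abs_arg_le_pi_div_two_iff, div_re_eq]
  refine div_nonneg ?_ (Complex.normSq_nonneg _)
  simp only [toC_re, toC_im]
  obtain ⟨a1, a2⟩ := a
  obtain ⟨b1, b2⟩ := b
  obtain ⟨-, h1, h2⟩ := h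
  -- `p * q ≥ 0` for integers at distance at most `1`
  have key : ∀ p q : ℤ, |p - q| ≤ 1 → 0 ≤ q * p := by
    intro p q h
    rw [abs_le] at h
    rcases lt_trichotomy p 0 with hp | hp | hp
    · exact mul_nonneg_of_nonpos_of_nonpos (by omega) hp.le
    · simp [hp]
    · exact mul_nonneg (by omega) hp.le
  have := add_nonneg (key a1 b1 h1) (key a2 b2 h2)
  exact_mod_cast this

lemma abs_arg_lt_of_adj {a b : Site} (ha : a ≠ 0) (hb : b ≠ 0) (h : adj a b) :
    |Complex.arg (toC b / toC a)| < Real.pi / 2 := by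
  rw [Complex.abs_arg_lt_pi_div_two_iff]
  left
  rw [div_re_eq]
  refine div_pos ?_ (Complex.normSq_pos.2 (toC_ne_zero ha))
  simp only [toC_re, toC_im]
  obtain ⟨a1, a2⟩ := a
  obtain ⟨b1, b2⟩ := b
  have hs := h.star
  obtain ⟨-, h1, h2⟩ := hs
  simp only [adj, abs_le] at h h1 h2
  simp only [ne_eq, Prod.mk_eq_zero, not_and] at ha hb
  -- twice the scalar product is `|a|² + |b|² - |a - b|² ≥ 1 + 1 - 1`
  have key : 0 < b1 * a1 + b2 * a2 := by
    by_contra! hle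
    have hA : 1 ≤ a1 ^ 2 + a2 ^ 2 := by
      by_contra! hA
      have e1 : a1 = 0 := by nlinarith [sq_nonneg a2, sq_nonneg a1]
      have e2 : a2 = 0 := by nlinarith [sq_nonneg a2, sq_nonneg a1]
      exact ha e1 e2
    have hB : 1 ≤ b1 ^ 2 + b2 ^ 2 := by
      by_contra! hB
      have e1 : b1 = 0 := by nlinarith [sq_nonneg b2, sq_nonneg b1]
      have e2 : b2 = 0 := by nlinarith [sq_nonneg b2, sq_nonneg b1]
      exact hb e1 e2
    nlinarith
  exact_mod_cast key

lemma arg_div_coe {a b : ℂ} (ha : a ≠ 0) (hb : b ≠ 0) :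
    (Complex.arg (b / a) : Real.Angle) = Complex.arg b - Complex.arg a :=
  Complex.arg_div_coe_angle hb ha

/-- The quadrilateral relation: moving the viewpoint from `w` to a neighbour `w'` changes the
angle of a `*`step only by a coboundary. Modulo `2π` this is clear, and the four angles
involved are too small for a discrepancy. -/
lemma ang_sub_ang {w w' a b : Site} (hw : adj w w') (hab : adjStar a b)
    (ha : a ≠ w) (ha' : a ≠ w') (hb : b ≠ w) (hb' : b ≠ w') :
    ang w a b - ang w' a b =
      Complex.arg (toC (b - w) / toC (b - w')) - Complex.arg (toC (a - w) / toC (a - w')) := by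
  have e1 := toC_ne_zero (sub_ne_zero.2 ha)
  have e2 := toC_ne_zero (sub_ne_zero.2 ha')
  have e3 := toC_ne_zero (sub_ne_zero.2 hb)
  have e4 := toC_ne_zero (sub_ne_zero.2 hb')
  have s1 : ∀ v, adjStar (a - v) (b - v) := fun v => by
    obtain ⟨h1, h2, h3⟩ := hab
    refine ⟨fun h => h1 (by simpa using h), ?_, ?_⟩ <;> simpa
  have s2 : ∀ v, adj (v - w') (v - w) := fun v => by
    simp only [adj, Prod.fst_sub, Prod.snd_sub] at hw ⊢
    linarith [hw]
  have b1 := abs_le.1 (abs_arg_le_of_adjStar (s1 w))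
  have b2 := abs_le.1 (abs_arg_le_of_adjStar (s1 w'))
  have b3 := abs_lt.1 (abs_arg_lt_of_adj (sub_ne_zero.2 ha') (sub_ne_zero.2 ha) (s2 a))
  have b4 := abs_lt.1 (abs_arg_lt_of_adj (sub_ne_zero.2 hb') (sub_ne_zero.2 hb) (s2 b))
  have hang : ((ang w a b - ang w' a b : ℝ) : Real.Angle) =
      ((Complex.arg (toC (b - w) / toC (b - w')) -
        Complex.arg (toC (a - w) / toC (a - w')) : ℝ) : Real.Angle) := by
    simp only [ang, Real.Angle.coe_sub, arg_div_coe e1 e3, arg_div_coe e2 e4,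
      arg_div_coe e4 e3, arg_div_coe e2 e1]
    abel
  rw [Real.Angle.angle_eq_iff_two_pi_dvd_sub] at hang
  obtain ⟨k, hk⟩ := hang
  have hpi := Real.pi_pos
  simp only [ang] at hk ⊢
  have hk1 : (k : ℝ) < 1 := by
    by_contra! h
    nlinarith
  have hk2 : (-1 : ℝ) < k := by
    by_contra! h
    nlinarith
  have : k = 0 := by
    have h1 : k < 1 := by exact_mod_cast hk1
    have h2 : -1 < k := by exact_mod_cast hk2
    omega
  rw [this] at hk
  simp at hk
  linarith

/-- The total angle, seen from `w`, of `P` followed by `L`. It is used where `L` leads from the end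
of `P` back to its start, so that the two form a closed curve. -/
noncomputable def loopAngle (P L : List Site) (w : Site) : ℝ :=
  pathSum (ang w) P + pathSum (ang w) L

lemma pathSum_ang_sub {P : List Site} (hP : P.IsChain adjStar) {x y : Site}
    (hx : P.head? = some x) (hy : P.getLast? = some y) {w w' : Site} (hw : adj w w')
    (h1 : w ∉ P) (h2 : w' ∉ P) :
    pathSum (ang w) P - pathSum (ang w') P =
      Complex.arg (toC (y - w) / toC (y - w')) - Complex.arg (toC (x - w) / toC (x - w')) := by
  rw [← pathSum_sub]
  exact pathSum_telescope (g := fun z => Complex.arg (toC (z - w) / toC (z - w'))) hP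
    (fun a ha b hb hab => ang_sub_ang hw hab (ne_of_mem_of_not_mem ha h1)
      (ne_of_mem_of_not_mem ha h2) (ne_of_mem_of_not_mem hb h1) (ne_of_mem_of_not_mem hb h2)) hx hy

/-- A closed `*`path has the same total angle seen from two neighbouring sites off the path. -/
lemma loopAngle_adj {P L : List Site} (hP : P.IsChain adjStar) (hL : L.IsChain adjStar)
    {x y : Site} (hPx : P.head? = some x) (hPy : P.getLast? = some y)
    (hLy : L.head? = some y) (hLx : L.getLast? = some x) {w w' : Site} (hw : adj w w')
    (h1 : w ∉ P) (h2 : w' ∉ P) (h3 : w ∉ L) (h4 : w' ∉ L) :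
    loopAngle P L w = loopAngle P L w' := by
  have e1 := pathSum_ang_sub hP hPx hPy hw h1 h2
  have e2 := pathSum_ang_sub hL hLy hLx hw h3 h4
  simp only [loopAngle]
  linarith

/-- Seen from outside a square containing the path, the path lies in an open half plane, so the
angle is a difference of arguments. -/
lemma exists_arg_of_notMem_square {M : ℕ} {w : Site} (hw : w ∉ square M) :
    ∃ g : Site → ℝ, ∀ a ∈ square M, ∀ b ∈ square M, ang w a b = g b - g a := by
  have key : ∃ u : ℂ, u ≠ 0 ∧ ∀ a ∈ square M, 0 < (u * toC (a - w)).re := by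
    have : (M : ℤ) < w.1 ∨ w.1 < -M ∨ (M : ℤ) < w.2 ∨ w.2 < -M := by
      by_contra! h
      exact hw ⟨abs_le.2 ⟨by omega, by omega⟩, abs_le.2 ⟨by omega, by omega⟩⟩
    rcases this with h | h | h | h
    · refine ⟨-1, by simp, fun a ha => ?_⟩
      have := (abs_le.1 ha.1).2
      have h' : a.1 < w.1 := by omega
      simpa [toC_re] using h'
    · refine ⟨1, by simp, fun a ha => ?_⟩
      have := (abs_le.1 ha.1).1
      have h' : w.1 < a.1 := by omega
      simpa [toC_re] using h'
    · refine ⟨Complex.I, by simp, fun a ha => ?_⟩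
      have := (abs_le.1 ha.2).2
      have h' : a.2 < w.2 := by omega
      simpa [toC_im] using h'
    · refine ⟨-Complex.I, by simp, fun a ha => ?_⟩
      have := (abs_le.1 ha.2).1
      have h' : w.2 < a.2 := by omega
      simpa [toC_im] using h'
  obtain ⟨u, hu, h⟩ := key
  refine ⟨fun z => Complex.arg (u * toC (z - w)), fun a ha b hb => ?_⟩
  have ha' := h a ha
  have hb' := h b hb
  have na : u * toC (a - w) ≠ 0 := fun h => by simp [h] at ha'
  have nb : u * toC (b - w) ≠ 0 := fun h => by simp [h] at hb'
  have b1 := abs_lt.1 (Complex.abs_arg_lt_pi_div_two_iff.2 (.inl ha'))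
  have b2 := abs_lt.1 (Complex.abs_arg_lt_pi_div_two_iff.2 (.inl hb'))
  rw [ang, ← mul_div_mul_left _ _ hu]
  have hc : ((Complex.arg (u * toC (b - w)) - Complex.arg (u * toC (a - w)) : ℝ) : Real.Angle) =
      (Complex.arg (u * toC (b - w) / (u * toC (a - w))) : ℝ) := by
    rw [arg_div_coe na nb, Real.Angle.coe_sub]
  have := congrArg Real.Angle.toReal hc
  rw [Complex.arg_coe_angle_toReal_eq_arg, Real.Angle.toReal_coe_eq_self_iff.2] at this
  · exact this.symm
  · constructor <;> linarith

lemma loopAngle_eq_zero {P L : List Site} (hP : P.IsChain adjStar) (hL : L.IsChain adjStar)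
    {x y : Site} (hPx : P.head? = some x) (hPy : P.getLast? = some y)
    (hLy : L.head? = some y) (hLx : L.getLast? = some x) {M : ℕ}
    (hPM : ∀ z ∈ P, z ∈ square M) (hLM : ∀ z ∈ L, z ∈ square M) {w : Site} (hw : w ∉ square M) :
    loopAngle P L w = 0 := by
  obtain ⟨g, hg⟩ := exists_arg_of_notMem_square hw
  rw [loopAngle, pathSum_telescope hP (fun a ha b hb _ => hg a (hPM a ha) b (hPM b hb)) hPx hPy,
    pathSum_telescope hL (fun a ha b hb _ => hg a (hLM a ha) b (hLM b hb)) hLy hLx]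
  ring

/-- A `*`path avoiding the origin between the mirror-image sites `(-d, h)` and `(d, h)`
has nonzero winding: these sites do not have the same argument. -/
lemma winding_ne_zero {P : List Site} (hP : P.IsChain adjStar) {d h : ℤ} (hd : 0 < d)
    (hx : P.head? = some (-d, h)) (hy : P.getLast? = some (d, h))
    (h0 : (0 : Site) ∉ P) : winding P ≠ 0 := by
  intro hw
  have hpi := Real.pi_pos
  rw [winding_eq, mul_eq_zero] at hw
  have hw' : pathSum (ang 0) P = 0 := hw.resolve_left (by positivity)
  have hcoe : ((pathSum (ang 0) P : ℝ) : Real.Angle) =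
      pathSum (fun a b => (ang 0 a b : Real.Angle)) P := by
    simp only [pathSum]
    rw [← Real.Angle.coe_coeHom, map_list_sum, List.map_map]
    rfl
  rw [pathSum_telescope (g := fun z => (Complex.arg (toC z) : Real.Angle)) hP
    (fun a ha b hb _ => by
      rw [ang, sub_zero, sub_zero]
      exact arg_div_coe (toC_ne_zero (ne_of_mem_of_not_mem ha h0))
        (toC_ne_zero (ne_of_mem_of_not_mem hb h0))) hx hy, hw', Real.Angle.coe_zero, eq_comm,
    sub_eq_zero, Complex.arg_coe_angle_eq_iff] at hcoe
  have n1 : toC (d, h) ≠ 0 := toC_ne_zero (by simp [hd.ne'])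
  have n2 : toC (-d, h) ≠ 0 := toC_ne_zero (by simp [hd.ne'])
  have hdr : (0 : ℝ) < d := by exact_mod_cast hd
  rw [Complex.arg_eq_arg_iff n1 n2] at hcoe
  have hre := congrArg Complex.re hcoe
  rw [← Complex.ofReal_div, Complex.re_ofReal_mul, toC_re, toC_re] at hre
  have : 0 ≤ ‖toC (-d, h)‖ / ‖toC (d, h)‖ := by positivity
  push_cast at hre
  nlinarith [mul_nonneg this hdr.le]

/-! ### Closing a path by a horizontal segment -/

/-- The horizontal path of `k` steps to the left from `(a, h)`. -/
def hline (h : ℤ) : ℤ → ℕ → List Site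
  | a, 0 => [(a, h)]
  | a, k + 1 => (a, h) :: hline h (a - 1) k

lemma hline_eq_cons (h a : ℤ) (k : ℕ) : ∃ l, hline h a k = (a, h) :: l := by
  cases k with
  | zero => exact ⟨[], rfl⟩
  | succ k => exact ⟨_, rfl⟩

lemma hline_isChain (h a : ℤ) (k : ℕ) : (hline h a k).IsChain adjStar := by
  induction k generalizing a with
  | zero => simp [hline]
  | succ k ih =>
    have := ih (a - 1)
    obtain ⟨l, hl⟩ := hline_eq_cons h (a - 1) k
    rw [hline]
    rw [hl] at this ⊢
    exact List.isChain_cons_cons.2 ⟨⟨fun h' => by simp only [Prod.mk.injEq] at h'; omega, by simp, by simp⟩, this⟩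

lemma hline_getLast (h a : ℤ) (k : ℕ) : (hline h a k).getLast? = some (a - k, h) := by
  induction k generalizing a with
  | zero => simp [hline]
  | succ k ih =>
    have := ih (a - 1)
    obtain ⟨l, hl⟩ := hline_eq_cons h (a - 1) k
    rw [hline]
    rw [hl] at this ⊢
    rw [List.getLast?_cons_cons, this]
    push_cast
    congr 2
    ring

lemma mem_hline {h a : ℤ} {k : ℕ} {z : Site} (hz : z ∈ hline h a k) :
    z.2 = h ∧ a - k ≤ z.1 ∧ z.1 ≤ a := by
  induction k generalizing a with
  | zero =>
    obtain rfl : z = (a, h) := by simpa [hline] using hz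
    simp
  | succ k ih =>
    rw [hline] at hz
    rcases List.mem_cons.1 hz with rfl | hz
    · refine ⟨rfl, ?_, le_rfl⟩
      push_cast
      linarith
    · obtain ⟨h1, h2, h3⟩ := ih hz
      refine ⟨h1, ?_, by linarith⟩
      push_cast
      linarith

lemma mul_ang_left_pos {s h a : ℤ} (hs : s = 1 ∨ s = -1) (hh : 0 < s * h) :
    0 < (s : ℝ) * ang 0 (a, h) (a - 1, h) := by
  have hh0 : h ≠ 0 := by rintro rfl; simp at hh
  have hne : ((a, h) : Site) ≠ 0 := by simp [hh0]
  have hpos := Complex.normSq_pos.2 (toC_ne_zero hne)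
  have him : (toC ((a - 1, h) : Site) / toC ((a, h) : Site)).im =
      h / Complex.normSq (toC ((a, h) : Site)) := by
    rw [div_im_eq]
    simp only [toC_re, toC_im]
    push_cast
    ring
  rw [ang, sub_zero, sub_zero]
  rcases hs with rfl | rfl
  · have hh' : (0 : ℝ) < h := by exact_mod_cast (by simpa using hh : 0 < h)
    have h1 : 0 < (toC ((a - 1, h) : Site) / toC ((a, h) : Site)).im := by
      rw [him]; positivity
    have := (Complex.arg_nonneg_iff.2 h1.le).lt_of_ne (
      fun h => h1.ne' (Complex.arg_eq_zero_iff.1 h.symm).2)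
    simpa using this
  · have hh' : (h : ℝ) < 0 := by exact_mod_cast (by simpa using hh : h < 0)
    have h1 : (toC ((a - 1, h) : Site) / toC ((a, h) : Site)).im < 0 := by
      rw [him]; exact div_neg_of_neg_of_pos hh' hpos
    have := Complex.arg_neg_iff.2 h1
    push_cast
    linarith

lemma mul_pathSum_hline_nonneg {s h : ℤ} (a : ℤ) (k : ℕ) (hs : s = 1 ∨ s = -1)
    (hh : 0 < s * h) : 0 ≤ (s : ℝ) * pathSum (ang 0) (hline h a k) := by
  induction k generalizing a with
  | zero => simp [hline, pathSum_singleton]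
  | succ k ih =>
    have := ih (a - 1)
    obtain ⟨l, hl⟩ := hline_eq_cons h (a - 1) k
    rw [hline]
    rw [hl] at this ⊢
    rw [pathSum_cons_cons, mul_add]
    have := mul_ang_left_pos (a := a) hs hh
    linarith

/-- A function that does not change along nearest-neighbour steps inside a square is constant
there. -/
lemma eq_center_of_mem_square {T : Site → ℝ} {n : ℕ}
    (hT : ∀ w ∈ square n, ∀ w' ∈ square n, adj w w' → T w = T w') {z : Site}
    (hz : z ∈ square n) : T z = T 0 := by
  have hsq : ∀ a b : ℤ, (a, b) ∈ square n ↔ (-n ≤ a ∧ a ≤ n) ∧ (-n ≤ b ∧ b ≤ n) := fun a b => by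
    simp [square, abs_le]
  have h1 : ∀ k : ℕ, k ≤ n → T (k, 0) = T 0 ∧ T (-k, 0) = T 0 := by
    intro k
    induction k with
    | zero => intro; simp; rfl
    | succ k ih =>
      intro hk
      obtain ⟨i1, i2⟩ := ih (by omega)
      constructor
      · rw [← i1]
        refine hT _ ?_ _ ?_ ?_
        · rw [hsq]; omega
        · rw [hsq]; omega
        · simp [adj]
      · rw [← i2]
        refine hT _ ?_ _ ?_ ?_
        · rw [hsq]; omega
        · rw [hsq]; omega
        · simp [adj]
  obtain ⟨a, b⟩ := z
  rw [hsq] at hz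
  have h2 : ∀ k : ℕ, k ≤ n → T (a, k) = T 0 ∧ T (a, -k) = T 0 := by
    intro k
    induction k with
    | zero =>
      intro
      have : T (a, 0) = T 0 := by
        rcases le_total 0 a with h | h
        · obtain ⟨m, rfl⟩ := Int.eq_ofNat_of_zero_le h
          exact (h1 m (by omega)).1
        · obtain ⟨m, hm⟩ := Int.eq_ofNat_of_zero_le (neg_nonneg.2 h)
          obtain rfl : a = -m := by omega
          exact (h1 m (by omega)).2
      simp [this]
    | succ k ih =>
      intro hk
      obtain ⟨i1, i2⟩ := ih (by omega)
      constructor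
      · rw [← i1]
        refine hT _ ?_ _ ?_ ?_
        · rw [hsq]; omega
        · rw [hsq]; omega
        · simp [adj]
      · rw [← i2]
        refine hT _ ?_ _ ?_ ?_
        · rw [hsq]; omega
        · rw [hsq]; omega
        · simp [adj]
  rcases le_total 0 b with h | h
  · obtain ⟨m, rfl⟩ := Int.eq_ofNat_of_zero_le h
    exact (h2 m (by omega)).1
  · obtain ⟨m, hm⟩ := Int.eq_ofNat_of_zero_le (neg_nonneg.2 h)
    obtain rfl : b = -m := by omega
    exact (h2 m (by omega)).2

/-- The sites of the horizontal segment from `(-d, h)` to `(d, h)`. -/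
noncomputable def seg (d : ℕ) (h : ℤ) : Finset Site := Finset.Icc (-(d : ℤ)) d ×ˢ {h}

lemma mem_seg {d : ℕ} {h : ℤ} {z : Site} :
    z ∈ seg d h ↔ (-(d : ℤ) ≤ z.1 ∧ z.1 ≤ d) ∧ z.2 = h := by
  rw [seg, Finset.mem_product, Finset.mem_Icc, Finset.mem_singleton]

lemma seg_card (d : ℕ) (h : ℤ) : (seg d h).card = 2 * d + 1 := by
  simp [seg]
  omega

/-- The topological core: if the segment at height `h` carries spin `1` and its end points are
joined by a `1*`path turning around the square on the far side of it, then no `0`path leads from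
the square to infinity. -/
lemma no_escape {σ : Config} {n d : ℕ} {s h : ℤ} (hs : s = 1 ∨ s = -1) (hh : (n : ℤ) < s * h)
    (hline1 : ∀ z ∈ seg d h, σ z = true) {P : List Site} (hP : P.IsChain adjStar)
    (hP1 : ∀ z ∈ P, σ z = true) (hPn : ∀ z ∈ P, z ∉ square n)
    (hx : P.head? = some (-(d : ℤ), h)) (hy : P.getLast? = some ((d : ℤ), h))
    (hw : 0 < (s : ℝ) * winding P) :
    ∃ j : ℕ, n ≤ j ∧
      ¬ ∃ z ∈ square n, ∃ w, w ∉ square j ∧ JoinedIn adj (zeros σ) z w := by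
  set L := hline h d (2 * d) with hL
  have hLc : L.IsChain adjStar := hline_isChain _ _ _
  have hLy : L.head? = some ((d : ℤ), h) := by
    obtain ⟨l, hl⟩ := hline_eq_cons h d (2 * d)
    rw [hL, hl]; rfl
  have hLx : L.getLast? = some (-(d : ℤ), h) := by
    rw [hL, hline_getLast]
    push_cast
    congr 2
    ring
  have hLmem : ∀ z ∈ L, z ∈ seg d h := fun z hz => by
    obtain ⟨h1, h2, h3⟩ := mem_hline hz
    rw [mem_seg]
    push_cast at h2
    exact ⟨⟨by linarith, h3⟩, h1⟩
  have hL1 : ∀ z ∈ L, σ z = true := fun z hz => hline1 z (hLmem z hz)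
  have hLn : ∀ z ∈ L, z ∉ square n := fun z hz hzn => by
    have h1 := (mem_seg.1 (hLmem z hz)).2
    have h2 := abs_le.1 hzn.2
    rcases hs with rfl | rfl <;> omega
  obtain ⟨M, hM⟩ := exists_square_superset {z | z ∈ P ++ L} (List.finite_toSet _)
  refine ⟨max n M, le_max_left _ _, ?_⟩
  rintro ⟨z, hz, w, hwj, hzw⟩
  have hT0 : loopAngle P L 0 ≠ 0 := by
    intro h0
    have h1 := mul_pathSum_hline_nonneg (s := s) (h := h) d (2 * d) hs (by omega)
    rw [winding_eq] at hw
    have hpi := Real.pi_pos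
    have h2 : 0 < (s : ℝ) * pathSum (ang 0) P := by
      have h3 : (s : ℝ) * (1 / (2 * Real.pi) * pathSum (ang 0) P) =
        (1 / (2 * Real.pi)) * ((s : ℝ) * pathSum (ang 0) P) := by ring
      rw [h3] at hw
      exact (pos_iff_pos_of_mul_pos hw).1 (by positivity)
    have h4 : (s : ℝ) * loopAngle P L 0 = 0 := by rw [h0, mul_zero]
    rw [loopAngle, mul_add] at h4
    linarith
  have hadj : ∀ w w', w ∉ P → w ∉ L → w' ∉ P → w' ∉ L → adj w w' →
      loopAngle P L w = loopAngle P L w' := fun w w' h1 h2 h3 h4 h5 =>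
    loopAngle_adj hP hLc hx hy hLy hLx h5 h1 h3 h2 h4
  have hTz : loopAngle P L z = loopAngle P L 0 :=
    eq_center_of_mem_square (T := loopAngle P L) (fun a ha b hb => hadj a b
      (fun h => hPn a h ha) (fun h => hLn a h ha) (fun h => hPn b h hb) (fun h => hLn b h hb)) hz
  have hTw : loopAngle P L w = loopAngle P L z := by
    have off : ∀ a ∈ zeros σ, a ∉ P ∧ a ∉ L := fun a ha => by
      have ha' : σ a = false := ha
      exact ⟨fun h => by simp [hP1 a h] at ha', fun h => by simp [hL1 a h] at ha'⟩
    obtain ⟨hz0, hzw'⟩ := joinedIn_iff.1 hzw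
    clear hwj hzw
    induction hzw' with
    | refl => rfl
    | tail hb hbc ih =>
      have hb0 := (joinedIn_iff.2 ⟨hz0, hb⟩).mem_right
      rw [← ih]
      exact (hadj _ _ (off _ hb0).1 (off _ hb0).2 (off _ hbc.2).1 (off _ hbc.2).2 hbc.1).symm
  refine hT0 (hTz ▸ hTw ▸ loopAngle_eq_zero hP hLc hx hy hLy hLx
    (fun a ha => hM ?_) (fun a ha => hM ?_) (fun hwM => hwj (square_mono (le_max_right _ _) hwM)))
  · simp [ha]
  · simp [ha]

/-! ### Events -/

lemma measurableSet_joinedIn {m : MeasurableSpace Config} (R : Site → Site → Prop)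
    (G : Config → Set Site) (hG : ∀ z, MeasurableSet[m] {σ | z ∈ G σ}) (x y : Site) :
    MeasurableSet[m] {σ | JoinedIn R (G σ) x y} := by
  have : {σ | JoinedIn R (G σ) x y} =
      ⋃ P ∈ {P : List Site | P.IsChain R ∧ P.head? = some x ∧ P.getLast? = some y},
        ⋂ z ∈ {z | z ∈ P}, {σ | z ∈ G σ} := by
    ext σ
    simp only [JoinedIn, Set.mem_ofPred_eq, Set.mem_iUnion, Set.mem_iInter, exists_prop]
    constructor
    · rintro ⟨P, h1, h2, h3, h4⟩
      exact ⟨P, ⟨h1, h3, h4⟩, h2⟩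
    · rintro ⟨P, ⟨h1, h3, h4⟩, h2⟩
      exact ⟨P, h1, h2, h3, h4⟩
  rw [this]
  exact .biUnion (Set.to_countable _) fun P _ =>
    .biInter (Set.to_countable _) fun z _ => hG z

lemma measurableSet_far {m : MeasurableSpace Config} (R : Site → Site → Prop)
    (G : Config → Set Site) (hG : ∀ z, MeasurableSet[m] {σ | z ∈ G σ}) (x : Site) :
    MeasurableSet[m] {σ | Far R (G σ) x} := by
  have : {σ | Far R (G σ) x} =
      ⋂ k : ℕ, ⋃ y ∈ {y | y ∉ square k}, {σ | JoinedIn R (G σ) x y} := by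
    ext σ
    simp [Far]
  rw [this]
  exact .iInter fun k => .biUnion (Set.to_countable _) fun y _ =>
    measurableSet_joinedIn R G hG x y

lemma measurableSet_spin (z : Site) (b : Bool) : MeasurableSet {σ : Config | σ z = b} :=
  (measurable_pi_apply z : Measurable fun σ : Config => σ z) (measurableSet_singleton b)

lemma measurableSet_spin_outside {Δ : Finset Site} {z : Site} (hz : z ∉ Δ) (b : Bool) :
    MeasurableSet[outsideAlgebra Δ] {σ : Config | σ z = b} :=
  ⟨{f | f ⟨z, hz⟩ = b},
    (measurable_pi_apply (⟨z, hz⟩ : {z : Site // z ∉ Δ}) :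
      Measurable fun f : {z : Site // z ∉ Δ} → Bool => f ⟨z, hz⟩) (measurableSet_singleton b), rfl⟩

lemma outsideAlgebra_le (Δ : Finset Site) : outsideAlgebra Δ ≤ MeasurableSpace.pi :=
  Measurable.comap_le (by fun_prop)

lemma measurableSet_mem_ones_diff (B : Set Site) (z : Site) :
    MeasurableSet {σ : Config | z ∈ ones σ \ B} := by
  by_cases hz : z ∈ B
  · simp [hz]
  · simpa [hz, ones] using measurableSet_spin z true

lemma measurableSet_far_ones (x : Site) :
    MeasurableSet {σ : Config | Far adjStar (ones σ) x} :=
  measurableSet_far _ _ (fun z => measurableSet_spin z true) x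

lemma increasing_far_ones (x : Site) :
    IncreasingEvent {σ : Config | Far adjStar (ones σ) x} := by
  intro ξ η h hle m
  obtain ⟨y, hy, hj⟩ := h m
  refine ⟨y, hy, hj.mono fun z hz => ?_⟩
  have h1 : ξ z = true := hz
  have := hle z
  rw [h1] at this
  exact top_le_iff.1 this

/-- The event that the mirror-image sites `(-d, h)` and `(d, h)` are joined by a `1*`path that
avoids `square n` and has winding number of the sign of `t`. -/
def goodPath (n d : ℕ) (h t : ℤ) : Set Config :=
  {σ | ∃ P : List Site, starPathBetweenAvoiding σ (square n) (-(d : ℤ), h) ((d : ℤ), h) P ∧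
    0 < (t : ℝ) * winding P}

/-- The event that `goodPath n d h t` holds once all spins of the segment at height `h` are
turned to `1`. It does not depend on the spins of this segment. -/
def goodPathOff (n d : ℕ) (h t : ℤ) : Set Config :=
  {σ | ∃ P : List Site, P.IsChain adjStar ∧ (∀ z ∈ P, z ∈ seg d h ∨ σ z = true) ∧
    (∀ z ∈ P, z ∉ square n) ∧ P.head? = some (-(d : ℤ), h) ∧ P.getLast? = some ((d : ℤ), h) ∧
    0 < (t : ℝ) * winding P}

lemma goodPath_subset (n d : ℕ) (h t : ℤ) : goodPath n d h t ⊆ goodPathOff n d h t := by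
  rintro σ ⟨P, ⟨⟨-, h1, h2⟩, h3, h4, h5⟩, h6⟩
  exact ⟨P, h1, fun z hz => .inr (h2 z hz), h5, h3, h4, h6⟩

lemma measurableSet_goodPathOff (n d : ℕ) (h t : ℤ) :
    MeasurableSet[outsideAlgebra (seg d h)] (goodPathOff n d h t) := by
  have : goodPathOff n d h t =
      ⋃ P ∈ {P : List Site | P.IsChain adjStar ∧ (∀ z ∈ P, z ∉ square n) ∧
        P.head? = some (-(d : ℤ), h) ∧ P.getLast? = some ((d : ℤ), h) ∧
        0 < (t : ℝ) * winding P},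
        ⋂ z ∈ {z | z ∈ P ∧ z ∉ seg d h}, {σ | σ z = true} := by
    ext σ
    simp only [goodPathOff, Set.mem_ofPred_eq, Set.mem_iUnion, Set.mem_iInter, exists_prop]
    constructor
    · rintro ⟨P, h1, h2, h3⟩
      exact ⟨P, ⟨h1, h3⟩, fun z hz => (h2 z hz.1).resolve_left hz.2⟩
    · rintro ⟨P, ⟨h1, h3⟩, h2⟩
      exact ⟨P, h1, fun z hz => or_iff_not_imp_left.2 fun h => h2 z ⟨hz, h⟩, h3⟩
  rw [this]
  exact .biUnion (Set.to_countable _) fun P _ =>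
    .biInter (Set.to_countable _) fun z hz => measurableSet_spin_outside hz.2 true

/-- The event that `square n` is joined by a `0`path in `square (j + 1)` to the outside of
`square j`. -/
def exits (n j : ℕ) : Set Config :=
  {σ | ∃ z ∈ square n, ∃ w, w ∉ square j ∧ JoinedIn adj (zeros σ ∩ square (j + 1)) z w}

/-- The event that `square n` meets an infinite `0`cluster, as an intersection of local
events. -/
def escapes (n : ℕ) : Set Config := {σ | ∀ j, n ≤ j → σ ∈ exits n j}

/-- The local approximations of `escapes n`. -/
def escapesUpTo (n m : ℕ) : Set Config := {σ | ∀ j, n ≤ j → j ≤ m → σ ∈ exits n j}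

lemma measurableSet_exits {m : MeasurableSpace Config} (n j : ℕ)
    (hm : ∀ z ∈ square (j + 1), MeasurableSet[m] {σ : Config | σ z = false}) :
    MeasurableSet[m] (exits n j) := by
  have : exits n j = ⋃ z ∈ square n, ⋃ w ∈ {w | w ∉ square j},
      {σ | JoinedIn adj (zeros σ ∩ square (j + 1)) z w} := by
    ext σ
    simp [exits]
  rw [this]
  refine .biUnion (Set.to_countable _) fun z _ => .biUnion (Set.to_countable _) fun w _ =>
    measurableSet_joinedIn _ _ (fun y => ?_) _ _
  by_cases hy : y ∈ square (j + 1)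
  · simpa [hy, zeros] using hm y hy
  · simp [hy]

lemma measurableSet_escapesUpTo {m : MeasurableSpace Config} (n k : ℕ)
    (hm : ∀ z ∈ square (k + 1), MeasurableSet[m] {σ : Config | σ z = false}) :
    MeasurableSet[m] (escapesUpTo n k) := by
  have : escapesUpTo n k = ⋂ j ∈ {j | n ≤ j ∧ j ≤ k}, exits n j := by
    ext σ
    simp [escapesUpTo]
  rw [this]
  exact .biInter (Set.to_countable _) fun j hj => measurableSet_exits n j fun z hz =>
    hm z (square_mono (by simpa using hj.2) hz)

lemma escapes_eq_iInter (n : ℕ) : escapes n = ⋂ m, escapesUpTo n m := by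
  ext σ
  simp only [escapes, escapesUpTo, Set.mem_iInter, Set.mem_ofPred_eq]
  exact ⟨fun h m j hj _ => h j hj, fun h j hj => h j j hj le_rfl⟩

lemma measurableSet_escapesUpTo' (n k : ℕ) : MeasurableSet (escapesUpTo n k) :=
  measurableSet_escapesUpTo n k fun z _ => measurableSet_spin z false

lemma measurableSet_escapes (n : ℕ) : MeasurableSet (escapes n) := by
  rw [escapes_eq_iInter]
  exact .iInter fun m => measurableSet_escapesUpTo' n m

lemma escapes_mono : Monotone escapes := by
  intro n n' hn σ h j hj
  obtain ⟨z, hz, w, hw⟩ := h j (hn.trans hj)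
  exact ⟨z, square_mono hn hz, w, hw⟩

lemma exists_escapes {σ : Config} (h : UniqueInfinite0 σ) : ∃ n, σ ∈ escapes n := by
  obtain ⟨S, ⟨⟨⟨z, hz⟩, h0, hj, -⟩, hS⟩, -⟩ := h
  obtain ⟨n, hn⟩ := exists_square_superset {z} (Set.finite_singleton z)
  refine ⟨n, fun j hnj => ?_⟩
  obtain ⟨w, hw, hwj⟩ := Set.Infinite.exists_notMem_square hS j
  have hzn : z ∈ square n := hn rfl
  obtain ⟨w', hw', hj'⟩ := joined_trim (square_mono hnj hzn) hwj ((hj z hz w hw).mono h0)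
  refine ⟨z, hzn, w', hw', ?_⟩
  assumption

/-! ### Probability estimates -/

lemma exists_measure_escapes_compl_le (μ : Measure Config) [IsProbabilityMeasure μ]
    (h0 : ∀ᵐ σ ∂μ, UniqueInfinite0 σ) {q : ℝ≥0∞} (hq : 0 < q) :
    ∃ N, ∀ n, N ≤ n → μ (escapes n)ᶜ ≤ q := by
  have hlim := tendsto_measure_iInter_atTop (μ := μ) (s := fun n => (escapes n)ᶜ)
    (fun n => (measurableSet_escapes n).compl.nullMeasurableSet)
    (fun a b hab => Set.compl_subset_compl.2 (escapes_mono hab)) ⟨0, measure_ne_top _ _⟩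
  have hz : μ (⋂ n, (escapes n)ᶜ) = 0 := by
    rw [← nonpos_iff_eq_zero, ← ae_iff.1 h0]
    refine measure_mono fun σ hσ hu => ?_
    obtain ⟨n, hn⟩ := exists_escapes hu
    exact Set.mem_iInter.1 hσ n hn
  rw [hz] at hlim
  obtain ⟨N, hN⟩ := Filter.eventually_atTop.1 (hlim.eventually_lt_const hq)
  exact ⟨N, fun n hn => (hN n hn).le⟩

/-- The event that some site outside `square d` lies in an infinite `1*`component, but no
longer does so after removal of `square n`. -/
def cutOff (n d : ℕ) : Set Config :=
  {σ | ∃ x, x ∉ square d ∧ Far adjStar (ones σ) x ∧ ¬ Far adjStar (ones σ \ square n) x}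

lemma measurableSet_cutOff (n d : ℕ) : MeasurableSet (cutOff n d) := by
  have : cutOff n d = ⋃ x ∈ {x | x ∉ square d}, {σ | Far adjStar (ones σ) x} ∩
      {σ | Far adjStar (ones σ \ square n) x}ᶜ := by
    ext σ
    simp only [cutOff, Set.mem_ofPred_eq, Set.mem_iUnion, Set.mem_inter_iff, Set.mem_compl_iff,
      exists_prop]
  rw [this]
  exact .biUnion (Set.to_countable _) fun x _ => (measurableSet_far_ones x).inter
    (measurableSet_far _ _ (measurableSet_mem_ones_diff _) x).compl

lemma exists_measure_cutOff_le (μ : Measure Config) [IsProbabilityMeasure μ] (n : ℕ)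
    {q : ℝ≥0∞} (hq : 0 < q) : ∃ N, ∀ d, N ≤ d → μ (cutOff n d) ≤ q := by
  have hlim := tendsto_measure_iInter_atTop (μ := μ) (s := cutOff n)
    (fun d => (measurableSet_cutOff n d).nullMeasurableSet)
    (fun a b hab σ ⟨x, hx, h⟩ => ⟨x, fun hxa => hx (square_mono hab hxa), h⟩)
    ⟨0, measure_ne_top _ _⟩
  have hz : ⋂ d, cutOff n d = ∅ := by
    refine Set.eq_empty_of_forall_notMem fun σ hσ => ?_
    obtain ⟨M, hM⟩ := exists_bound_far (ones σ) n
    obtain ⟨x, hx, h1, h2⟩ := Set.mem_iInter.1 hσ M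
    exact h2 (hM x hx h1)
  rw [hz, measure_empty] at hlim
  obtain ⟨N, hN⟩ := Filter.eventually_atTop.1 (hlim.eventually_lt_const hq)
  exact ⟨N, fun d hd => (hN d hd).le⟩

/-- Almost surely, two sites in infinite `1*`components of the complement of a square are
joined off this square. Otherwise, by the bounded energy condition, this failure would happen
with positive probability while the square carries only spins `0`, and there would be two infinite
`1*`clusters. -/
lemma measure_not_joined_eq_zero (μ : Measure Config) (hbe : BoundedEnergy μ)
    (h1 : ∀ᵐ σ ∂μ, AtMostOneInfinite1 σ) (n : ℕ) (x y : Site) :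
    μ {σ | Far adjStar (ones σ \ square n) x ∧ Far adjStar (ones σ \ square n) y ∧
      ¬ JoinedIn adjStar (ones σ \ square n) x y} = 0 := by
  set Δ := (square_finite n).toFinset with hΔ
  have hmem : ∀ z, z ∈ Δ ↔ z ∈ square n := fun z => by simp [hΔ]
  obtain ⟨κ, hκ, hbe⟩ := hbe Δ.card
  have hG : ∀ z, MeasurableSet[outsideAlgebra Δ] {σ : Config | z ∈ ones σ \ square n} := by
    intro z
    by_cases hz : z ∈ square n
    · simp [hz]
    · simpa [hz, ones] using measurableSet_spin_outside (mt (hmem z).1 hz) true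
  have hle := hbe Δ rfl (fun _ => false) _ (((measurableSet_far adjStar _ hG x).inter
    ((measurableSet_far adjStar _ hG y).inter (measurableSet_joinedIn adjStar _ hG x y).compl)))
  have hzero : μ (cylEvent Δ (fun _ => false) ∩
      ({σ | Far adjStar (ones σ \ square n) x} ∩ ({σ | Far adjStar (ones σ \ square n) y} ∩
        {σ | JoinedIn adjStar (ones σ \ square n) x y}ᶜ))) = 0 := by
    rw [← nonpos_iff_eq_zero, ← ae_iff.1 h1]
    refine measure_mono ?_
    rintro σ ⟨hc, hx, hy, hj⟩ hone
    have heq : ones σ \ square n = ones σ := by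
      refine sdiff_eq_left.2 (Set.disjoint_left.2 fun z hz hzn => ?_)
      have h2 : σ z = false := hc z ((hmem z).2 hzn)
      have h3 : σ z = true := hz
      simp [h2] at h3
    simp only [Set.mem_ofPred_eq, Set.mem_compl_iff, heq] at hx hy hj
    exact hj (joined_of_atMostOne hone hx hy)
  rw [hzero, nonpos_iff_eq_zero, mul_eq_zero] at hle
  exact hle.resolve_left (ne_of_gt hκ)

/-- Two mirror-image sites far from the square are joined off the square, on one side or the
other, with probability almost `c²`. -/
lemma sq_le_goodPath (μ : Measure Config) (hpa : PositivelyAssociated μ)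
    (hbe : BoundedEnergy μ) (h1 : ∀ᵐ σ ∂μ, AtMostOneInfinite1 σ) (c : ℝ≥0∞)
    (hlb : ∀ x : Site, c ≤ μ {σ | InInfinite1 σ x}) {n d : ℕ} (hd : 0 < d) (h : ℤ) :
    c ^ 2 ≤ μ (cutOff n (d - 1)) + (μ (goodPath n d h (-1)) + μ (goodPath n d h 1)) := by
  set x : Site := (-(d : ℤ), h) with hx
  set y : Site := ((d : ℤ), h) with hy
  have hxd : x ∉ square (d - 1) := fun h' => by
    have := (abs_le.1 h'.1).1
    simp only [hx] at this
    omega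
  have hyd : y ∉ square (d - 1) := fun h' => by
    have := (abs_le.1 h'.1).2
    simp only [hy] at this
    omega
  have hc : ∀ z, c ≤ μ {σ | Far adjStar (ones σ) z} := fun z =>
    (hlb z).trans (measure_mono fun σ h => InInfinite1.far h)
  calc c ^ 2 ≤ μ {σ | Far adjStar (ones σ) x} * μ {σ | Far adjStar (ones σ) y} := by
        rw [sq]
        exact mul_le_mul' (hc x) (hc y)
    _ ≤ μ ({σ | Far adjStar (ones σ) x} ∩ {σ | Far adjStar (ones σ) y}) :=
        hpa _ _ (measurableSet_far_ones x) (measurableSet_far_ones y) (increasing_far_ones x)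
          (increasing_far_ones y)
    _ ≤ μ ({σ | Far adjStar (ones σ \ square n) x ∧ Far adjStar (ones σ \ square n) y ∧
          ¬ JoinedIn adjStar (ones σ \ square n) x y} ∪
          (cutOff n (d - 1) ∪ (goodPath n d h (-1) ∪ goodPath n d h 1))) := by
        refine measure_mono ?_
        rintro σ ⟨hfx, hfy⟩
        by_cases hfx' : Far adjStar (ones σ \ square n) x
        swap
        · exact .inr (.inl ⟨x, hxd, hfx, hfx'⟩)
        by_cases hfy' : Far adjStar (ones σ \ square n) y
        swap
        · exact .inr (.inl ⟨y, hyd, hfy, hfy'⟩)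
        by_cases hj : JoinedIn adjStar (ones σ \ square n) x y
        swap
        · exact .inl ⟨hfx', hfy', hj⟩
        refine .inr (.inr ?_)
        obtain ⟨P, hP, hG, hPx, hPy⟩ := hj
        have hP0 : (0 : Site) ∉ P := fun h0 => (hG 0 h0).2 (by simp [square])
        have hne := winding_ne_zero hP (by exact_mod_cast hd) hPx hPy hP0
        have hsp : starPathBetweenAvoiding σ (square n) x y P :=
          ⟨⟨by rintro rfl; simp at hPx, hP, fun z hz => (hG z hz).1⟩, hPx, hPy,
            fun z hz => (hG z hz).2⟩
        rcases lt_or_gt_of_ne hne with hlt | hlt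
        · exact .inl ⟨P, hsp, by simpa using hlt⟩
        · exact .inr ⟨P, hsp, by simpa using hlt⟩
    _ ≤ 0 + (μ (cutOff n (d - 1)) + (μ (goodPath n d h (-1)) + μ (goodPath n d h 1))) := by
        rw [← measure_not_joined_eq_zero μ hbe h1 n x y]
        exact (measure_union_le _ _).trans (add_le_add le_rfl ((measure_union_le _ _).trans
          (add_le_add le_rfl (measure_union_le _ _))))
    _ = _ := zero_add _

/-- Paths turning around the square on the side away from height `h` cannot have probability at
least `q + r` for all `h` of the same sign, where `μ (escapes n)ᶜ ≤ q` and `0 < r`: closing them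
up along the segment at height `h` costs only a factor bounded away from `0`, and the resulting circuit prevents an
escape that was already decided, up to a small error, by the spins below height `|h|`. -/
lemma exists_goodPath_lt (μ : Measure Config) [IsProbabilityMeasure μ] (hbe : BoundedEnergy μ)
    {n d : ℕ} {s : ℤ} (hs : s = 1 ∨ s = -1) {q r : ℝ≥0∞} (hr : 0 < r)
    (hq : μ (escapes n)ᶜ ≤ q) (hqt : q ≠ ⊤) :
    ∃ h : ℤ, 0 < s * h ∧ μ (goodPath n d h s) < q + r := by
  by_contra! hcon
  obtain ⟨δ, hδ, hbe⟩ := hbe (2 * d + 1)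
  have hlim := tendsto_measure_iInter_atTop (μ := μ) (s := fun m => escapesUpTo n m \ escapes n)
    (fun m => ((measurableSet_escapesUpTo' n m).diff (measurableSet_escapes n)).nullMeasurableSet)
    (fun a b hab σ hσ => ⟨fun j hj hja => hσ.1 j hj (hja.trans hab), hσ.2⟩)
    ⟨0, measure_ne_top _ _⟩
  have hz : ⋂ m, (escapesUpTo n m \ escapes n) = ∅ := by
    simp only [Set.sdiff_eq]
    rw [← Set.iInter_inter, ← escapes_eq_iInter, Set.inter_compl_self]
  rw [hz, measure_empty] at hlim
  obtain ⟨m, hm⟩ := (hlim.eventually_lt_const (ENNReal.mul_pos hδ.ne' hr.ne')).exists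
  set h : ℤ := s * ((n : ℤ) + m + 2) with hh
  have hsh : s * h = (n : ℤ) + m + 2 := by
    rw [hh]
    rcases hs with rfl | rfl <;> ring
  have hoff : ∀ z ∈ square (m + 1), z ∉ seg d h := fun z hz hzs => by
    have e1 := (mem_seg.1 hzs).2
    have e2 := abs_le.1 hz.2
    rcases hs with rfl | rfl <;> push_cast at e2 <;> omega
  have hle := hbe (seg d h) (seg_card d h) (fun _ => true) _
    (MeasurableSet.inter (measurableSet_escapesUpTo n m fun z hz =>
      measurableSet_spin_outside (hoff z hz) false) (measurableSet_goodPathOff n d h s))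
  have hsub : cylEvent (seg d h) (fun _ => true) ∩ (escapesUpTo n m ∩ goodPathOff n d h s) ⊆
      escapesUpTo n m \ escapes n := by
    rintro σ ⟨hc, he, P, hP, hP1, hPn, hx, hy, hw⟩
    refine ⟨he, fun hesc => ?_⟩
    obtain ⟨j, hnj, hno⟩ := no_escape hs (by omega) hc hP
      (fun z hz => (hP1 z hz).elim (fun h => hc z h) id) hPn hx hy hw
    obtain ⟨z, hz, w, hw, hj⟩ := hesc j hnj
    exact hno ⟨z, hz, w, hw, hj.mono Set.inter_subset_left⟩
  have hr' : r ≤ μ (escapesUpTo n m ∩ goodPathOff n d h s) := by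
    have e1 : q + r ≤ q + μ (escapesUpTo n m ∩ goodPathOff n d h s) := by
      calc q + r ≤ μ (goodPath n d h s) := hcon h (by omega)
        _ ≤ μ ((escapes n)ᶜ ∪ (escapesUpTo n m ∩ goodPathOff n d h s)) := by
            refine measure_mono fun σ hσ => ?_
            by_cases he : σ ∈ escapes n
            · exact .inr ⟨fun j hj _ => he j hj, goodPath_subset _ _ _ _ hσ⟩
            · exact .inl he
        _ ≤ _ := (measure_union_le _ _).trans (add_le_add hq le_rfl)
    exact (ENNReal.add_le_add_iff_left hqt).1 e1
  exact absurd hm (not_lt.2 ((mul_le_mul' le_rfl hr').trans (hle.trans (measure_mono hsub))))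


/-- Lemma 4: existence of sites `x` (left of `Γ`) and `y` (right of `Γ`) and heights
`h > 0`, `h < 0` for which clockwise resp. counterclockwise `1*`paths from `x+(0,h)` to
`y+(0,h)` around `Γ` have probability at least `c²/4`. -/
theorem statement7 (μ : Measure Config) [IsProbabilityMeasure μ]
    (hpa : PositivelyAssociated μ) (hbe : BoundedEnergy μ)
    (h0 : ∀ᵐ σ ∂μ, UniqueInfinite0 σ) (h1 : ∀ᵐ σ ∂μ, AtMostOneInfinite1 σ)
    (c : ℝ≥0∞) (hc : 0 < c) (hlb : ∀ x : Site, c ≤ μ {σ | InInfinite1 σ x})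
    (Γ : Finset Site) (hΓ : ((0 : ℤ), (0 : ℤ)) ∈ Γ) :
    ∃ x y : Site, OnLeftSide x ↑Γ ∧ OnRightSide y ↑Γ ∧
      (∃ h : ℤ, 0 < h ∧ c ^ 2 / 4 ≤
        μ {σ | ∃ P : List Site,
          starPathBetweenAvoiding σ ↑Γ (x + ((0 : ℤ), h)) (y + ((0 : ℤ), h)) P ∧
          winding P < 0}) ∧
      (∃ h : ℤ, h < 0 ∧ c ^ 2 / 4 ≤
        μ {σ | ∃ P : List Site,
          starPathBetweenAvoiding σ ↑Γ (x + ((0 : ℤ), h)) (y + ((0 : ℤ), h)) P ∧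
          0 < winding P}) := by
  have hc1 : c ≤ 1 := (hlb 0).trans prob_le_one
  have hct : c ≠ ⊤ := ne_top_of_le_ne_top ENNReal.one_ne_top hc1
  set q : ℝ≥0∞ := c ^ 2 / 8 with hqdef
  have hq : 0 < q := ENNReal.div_pos (pow_ne_zero 2 hc.ne') (by simp)
  have hqt : q ≠ ⊤ := ENNReal.div_ne_top (ENNReal.pow_ne_top hct) (by simp)
  have hc8 : c ^ 2 = 8 * q := by
    rw [hqdef, ENNReal.mul_div_cancel (by simp) (by simp)]
  have hc4 : c ^ 2 / 4 = 2 * q := by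
    rw [hc8, show (8 : ℝ≥0∞) * q = 4 * (2 * q) by ring, mul_div_assoc,
      ENNReal.mul_div_cancel (by simp) (by simp)]
  obtain ⟨N₁, hN₁⟩ := exists_measure_escapes_compl_le μ h0 hq
  obtain ⟨N₂, hN₂⟩ := exists_square_superset (Γ : Set Site) Γ.finite_toSet
  set n := max N₁ N₂ with hn
  have hΓn : (Γ : Set Site) ⊆ square n := hN₂.trans (square_mono (le_max_right _ _))
  obtain ⟨N₃, hN₃⟩ := exists_measure_cutOff_le μ n hq
  set d := max n N₃ + 1 with hd
  have hnd : (n : ℤ) ≤ d := by omega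
  have hΓd : ∀ z ∈ (Γ : Set Site), |z.1| ≤ (d : ℤ) ∧ |z.2| ≤ (d : ℤ) := fun z hz =>
    ⟨(hΓn hz).1.trans hnd, (hΓn hz).2.trans hnd⟩
  -- Paths on the near side have probability at least `8 * q - q - (q + 4 * q) = 2 * q` at some height.
  have key : ∀ s : ℤ, s = 1 ∨ s = -1 →
      ∃ h : ℤ, 0 < s * h ∧ c ^ 2 / 4 ≤ μ (goodPath n d h (-s)) := by
    intro s hs
    obtain ⟨h, hh, hlt⟩ := exists_goodPath_lt μ hbe (n := n) (d := d) hs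
      (r := 4 * q) (ENNReal.mul_pos (by simp) hq.ne') (hN₁ n (le_max_left _ _)) hqt
    refine ⟨h, hh, ?_⟩
    have hall := sq_le_goodPath μ hpa hbe h1 c hlb (n := n) (d := d) (by omega) h
    have hcut := hN₃ (d - 1) (by omega)
    rw [hc4]
    have hsum : c ^ 2 ≤ q + ((q + 4 * q) + μ (goodPath n d h (-s))) := by
      rcases hs with rfl | rfl
      · refine hall.trans (add_le_add hcut ?_)
        rw [add_comm]
        exact add_le_add hlt.le le_rfl
      · exact hall.trans (add_le_add hcut (add_le_add hlt.le le_rfl))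
    rw [hc8, ← add_assoc] at hsum
    have h6 : (6 * q) + 2 * q ≤ 6 * q + μ (goodPath n d h (-s)) := by
      calc 6 * q + 2 * q = 8 * q := by ring
        _ ≤ _ := hsum
        _ = _ := by ring
    exact (ENNReal.add_le_add_iff_left (ENNReal.mul_ne_top (by simp) hqt)).1 h6
  refine ⟨(-(d : ℤ), 0), ((d : ℤ), 0), ⟨d, by omega, hΓd, le_rfl⟩, ⟨d, by omega, hΓd, le_rfl⟩,
    ?_, ?_⟩
  · obtain ⟨h, hh, hle⟩ := key 1 (.inl rfl)
    refine ⟨h, by simpa using hh, hle.trans (measure_mono ?_)⟩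
    rintro σ ⟨P, ⟨h1, h2, h3, h4⟩, hw⟩
    exact ⟨P, ⟨h1, by simpa using h2, by simpa using h3, fun z hz hzΓ => h4 z hz (hΓn hzΓ)⟩,
      by simpa using hw⟩
  · obtain ⟨h, hh, hle⟩ := key (-1) (.inr rfl)
    refine ⟨h, by simpa using hh, hle.trans (measure_mono ?_)⟩
    rintro σ ⟨P, ⟨h1, h2, h3, h4⟩, hw⟩
    exact ⟨P, ⟨h1, by simpa using h2, by simpa using h3, fun z hz hzΓ => h4 z hz (hΓn hzΓ)⟩,
      by simpa using hw⟩

end Percolation
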